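/- Let p be an odd prime with p > 3, let m be a primitive root modulo p, define x : ℕ → ℕ by x k = m^k % p, and set q̃ = (p-1)/2. Then for every natural number q ≥ q̃ and all k ∈ ℕ, (x (k + q + 1) : ℤ) = x (k + q - q̃) - x (k + q - q̃ + 1) + x (k + q). (That is, for any lifting dimension q + 1 ≥ q̃ + 1 the companion matrix with coefficients α_{q-q̃} = 1, α_{q-q̃+1} = -1, α_q = 1 and all other α_j = 0 gives an equivalent linear representation of the Diffie–Hellman dynamics.) -/

import Mathlib

/-!
Write `h = (p - 1) / 2`. Since `m` has order `p - 1 = 2 * h`, the element `m ^ h` of the field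
`ZMod p` squares to `1` without being `1`, so it equals `-1`. Hence the residues of `m ^ j` and
`m ^ (j + h)`, both strictly between `0` and `p`, have a sum divisible by `p`, which must be `p`
itself (`residue_add_residue_half_period`). Subtracting this identity at `j = k + q - h` from the
one at `j + 1` gives the recurrence.
-/

lemma pow_half_eq_neg_one (p m : ℕ) (hp : p.Prime) (hp3 : 3 < p)
    (hm : orderOf (m : ZMod p) = p - 1) : (m : ZMod p) ^ ((p - 1) / 2) = -1 := by
  haveI : Fact p.Prime := ⟨hp⟩
  have hodd : p % 2 = 1 := hp.eq_two_or_odd.resolve_left (by omega)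
  have hsq : ((m : ZMod p) ^ ((p - 1) / 2)) ^ 2 = 1 := by
    rw [← pow_mul, show (p - 1) / 2 * 2 = p - 1 by omega, ← hm, pow_orderOf_eq_one]
  refine (eq_or_eq_neg_of_sq_eq_sq _ _ (hsq.trans (one_pow 2).symm)).resolve_left fun h1 => ?_
  have hle := Nat.le_of_dvd (by omega) (orderOf_dvd_of_pow_eq_one h1)
  omega

/-- Residues half a period apart add up to `p`. -/
lemma residue_add_residue_half_period (p m : ℕ) (hp : p.Prime) (hp3 : 3 < p)
    (hm : orderOf (m : ZMod p) = p - 1) (j : ℕ) :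
    m ^ j % p + m ^ (j + (p - 1) / 2) % p = p := by
  haveI : Fact p.Prime := ⟨hp⟩
  have hhalf := pow_half_eq_neg_one p m hp hp3 hm
  have hdvd : p ∣ m ^ j % p + m ^ (j + (p - 1) / 2) % p := by
    rw [← ZMod.natCast_eq_zero_iff]
    push_cast [ZMod.natCast_mod, pow_add, hhalf]
    ring
  have hm0 : (m : ZMod p) ≠ 0 := by
    intro h0
    rw [h0, zero_pow (by omega)] at hhalf
    exact one_ne_zero (neg_eq_zero.mp hhalf.symm)
  have hpos : 0 < m ^ j % p := by
    refine Nat.pos_of_ne_zero fun h => pow_ne_zero j hm0 ?_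
    have := (ZMod.natCast_eq_zero_iff (m ^ j) p).mpr (Nat.dvd_of_mod_eq_zero h)
    exact_mod_cast this
  have h1 := Nat.mod_lt (m ^ j) hp.pos
  have h2 := Nat.mod_lt (m ^ (j + (p - 1) / 2)) hp.pos
  exact Nat.eq_of_dvd_of_lt_two_mul (by omega) hdvd (by omega)

/-- For `p` an odd prime with `p > 3`, `m` a primitive root modulo `p`,
`x k = m ^ k % p`, and `q̃ = (p-1)/2`: for every `q ≥ q̃` and all `k`,
`x (k + q + 1) = x (k + q - q̃) - x (k + q - q̃ + 1) + x (k + q)`.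
That is, for any lifting dimension `q + 1 ≥ q̃ + 1` the companion matrix with
coefficients `α_{q-q̃} = 1`, `α_{q-q̃+1} = -1`, `α_q = 1` (others zero) gives an
equivalent linear representation of the Diffie–Hellman dynamics. -/
theorem dh_linear_recurrence_any_dimension (p m : ℕ) (hp : p.Prime) (hp3 : 3 < p)
    (hm : orderOf (m : ZMod p) = p - 1) :
    ∀ q : ℕ, (p - 1) / 2 ≤ q → ∀ k : ℕ,
      ((m ^ (k + q + 1) % p : ℕ) : ℤ)
        = ((m ^ (k + q - (p - 1) / 2) % p : ℕ) : ℤ)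
          - ((m ^ (k + q - (p - 1) / 2 + 1) % p : ℕ) : ℤ)
          + ((m ^ (k + q) % p : ℕ) : ℤ) := by
  intro q hq k
  have h0 := residue_add_residue_half_period p m hp hp3 hm (k + q - (p - 1) / 2)
  have h1 := residue_add_residue_half_period p m hp hp3 hm (k + q - (p - 1) / 2 + 1)
  rw [show k + q - (p - 1) / 2 + (p - 1) / 2 = k + q by omega] at h0
  rw [show k + q - (p - 1) / 2 + 1 + (p - 1) / 2 = k + q + 1 by omega] at h1
  omega
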